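/- Let k ≥ 3 and 1 ≤ j ≤ k−1 be integers, let ω = log log n, and suppose p satisfies (j·log n − ω)/C(n,k−j) ≤ p ≤ (j·log n + ω)/C(n,k−j). Then with probability at least 1 − 3·n^{−12j/7} (for sufficiently large n), the random hypergraph H^k(n,p) has at most one non-trivial j-component, i.e. at most one j-component containing more than one j-set; equivalently, apart from isolated j-sets, all j-sets lie in a single j-component. -/

import Mathlib

open Filter Asymptotics

open scoped Classical

noncomputable section

/-- The collection of all `k`-element subsets of the vertex set `Fin n`,
    i.e. all potential edges of a `k`-uniform hypergraph on `n` vertices. -/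
def kSets (n k : ℕ) : Finset (Finset (Fin n)) :=
  Finset.powersetCard k (Finset.univ : Finset (Fin n))

/-- The probability that the binomial random `k`-uniform hypergraph `H^k(n,p)`
    (each `k`-set an edge independently with probability `p`) has property `Q`. -/
def binomProb (n k : ℕ) (p : ℝ) (Q : Finset (Finset (Fin n)) → Prop) : ℝ :=
  ∑ H ∈ (kSets n k).powerset,
    (if Q H then p ^ H.card * (1 - p) ^ ((kSets n k).card - H.card) else 0)

/-- The expectation of a real-valued random variable `X` of `H^k(n,p)`. -/
def binomExp (n k : ℕ) (p : ℝ) (X : Finset (Finset (Fin n)) → ℝ) : ℝ :=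
  ∑ H ∈ (kSets n k).powerset,
    p ^ H.card * (1 - p) ^ ((kSets n k).card - H.card) * X H

/-- The degree of a vertex set `J` in the hypergraph with edge set `H`:
    the number of edges containing `J`. -/
def setDegree {n : ℕ} (H : Finset (Finset (Fin n))) (J : Finset (Fin n)) : ℕ :=
  (H.filter (fun e => J ⊆ e)).card

/-- `J` is isolated in `H`: it is contained in no edge. -/
def IsIsolatedSet {n : ℕ} (H : Finset (Finset (Fin n))) (J : Finset (Fin n)) : Prop :=
  ∀ e ∈ H, ¬ J ⊆ e

/-- Two sets `J1`, `J2` are `j`-connected in the hypergraph with edge set `H`: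
    there is a walk of edges from one to the other in which consecutive edges
    intersect in at least `j` vertices. -/
def JConn {n : ℕ} (j : ℕ) (H : Finset (Finset (Fin n))) (J1 J2 : Finset (Fin n)) : Prop :=
  ∃ e1 ∈ H, ∃ e2 ∈ H, J1 ⊆ e1 ∧ J2 ⊆ e2 ∧
    Relation.ReflTransGen (fun e f => e ∈ H ∧ f ∈ H ∧ j ≤ (e ∩ f).card) e1 e2

/-- The hypergraph with edge set `H` is `j`-connected:
    all `j`-sets lie in a single `j`-component, i.e. are pairwise `j`-connected. -/
def JConnectedHG (n j : ℕ) (H : Finset (Finset (Fin n))) : Prop :=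
  ∀ J1 J2 : Finset (Fin n), J1.card = j → J2.card = j → JConn j H J1 J2

/-- `C` is a `j`-component of `H`: a maximal nonempty set of pairwise `j`-connected `j`-sets. -/
def IsJComponent (n j : ℕ) (H : Finset (Finset (Fin n))) (C : Finset (Finset (Fin n))) : Prop :=
  C.Nonempty ∧ (∀ J ∈ C, J.card = j) ∧ (∀ J1 ∈ C, ∀ J2 ∈ C, JConn j H J1 J2) ∧
    ∀ J : Finset (Fin n), J.card = j → (∃ J' ∈ C, JConn j H J J') → J ∈ C

/-- `D_s`: the number of `j`-sets of degree exactly `s`. -/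
def numDegSets (n j s : ℕ) (H : Finset (Finset (Fin n))) : ℕ :=
  ((Finset.powersetCard j (Finset.univ : Finset (Fin n))).filter
    (fun J => setDegree H J = s)).card

/-- The Poisson probability mass function with mean `lam`. -/
def poissonPMF (lam : ℝ) (i : ℕ) : ℝ := Real.exp (-lam) * lam ^ i / (Nat.factorial i)

/-- Total variation distance between the distribution of `D_s` in `H^k(n,p)`
    and the Poisson distribution with mean `lam`. -/
def dTVpoisson (n k j s : ℕ) (p lam : ℝ) : ℝ :=
  (1 / 2) * ∑' i : ℕ, |binomProb n k p (fun H => numDegSets n j s H = i) - poissonPMF lam i|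

/-- The probability that the uniform random hypergraph `H^k(n,M)` (chosen uniformly among
    all `k`-uniform hypergraphs on `Fin n` with exactly `M` edges) has property `Q`. -/
def uniformProb (n k M : ℕ) (Q : Finset (Finset (Fin n)) → Prop) : ℝ :=
  (((Finset.powersetCard M (kSets n k)).filter Q).card : ℝ) /
    ((Finset.powersetCard M (kSets n k)).card : ℝ)

/-!
A family `C` of `j`-sets is a `j`-component exactly when no edge is mixed, i.e. contains `j`-sets
inside and outside `C`, and `C` is pairwise `j`-connected by the remaining edges. Connectedness is
already witnessed by at most `#C` edges, so it survives keeping every edge with probability `q` at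
a cost of at most a factor `q ^ #C`. Thus `C` is a component of `H^k(n, p)` at most
`(1 - p) ^ m / (q ^ #C * (1 - p * q) ^ m)` times as often as of `H^k(n, p * q)`, where `m` is the
number of mixed `k`-sets. We take `p * q = 1 / C(n, k - j)` when `p ≥ β * log n / C(n, k - j)`.

If there are two components, the smaller one has at most half of all `j`-sets, and then
`m ≥ c * #C * C(n, k - j)`; for families of bounded size any `c < 1` is possible. As a component
has at least `C(k, j)` members, this makes the above ratio at most `n ^ (-B)` for every
`B < β * C(k, j)`. The expected number of components of `H^k(n, p * q)` is at most its expected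
number of edges, hence at most `n ^ j`.
-/

section BernoulliSubset

open Finset

variable {α : Type*}

/-- The probability that the random subset of `Y` containing each element independently with
probability `p` is equal to `H`. -/
def bernoulliWeight (Y : Finset α) (p : ℝ) (H : Finset α) : ℝ :=
  p ^ #H * (1 - p) ^ (#Y - #H)

/-- The probability that the random subset of `Y` containing each element independently with
probability `p` has property `A`. -/
def bernoulliProb (Y : Finset α) (p : ℝ) (A : Finset α → Prop) : ℝ :=
  ∑ H ∈ Y.powerset, if A H then bernoulliWeight Y p H else 0

variable {Y M D : Finset α} {p q : ℝ} {A B : Finset α → Prop}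

lemma bernoulliWeight_nonneg (hp₀ : 0 ≤ p) (hp₁ : p ≤ 1) (H : Finset α) :
    0 ≤ bernoulliWeight Y p H :=
  mul_nonneg (pow_nonneg hp₀ _) (pow_nonneg (sub_nonneg.2 hp₁) _)

lemma bernoulliProb_nonneg (hp₀ : 0 ≤ p) (hp₁ : p ≤ 1) : 0 ≤ bernoulliProb Y p A :=
  sum_nonneg fun H _ => ite_nonneg (bernoulliWeight_nonneg hp₀ hp₁ H) le_rfl

lemma bernoulliProb_congr (h : ∀ H ⊆ Y, (A H ↔ B H)) :
    bernoulliProb Y p A = bernoulliProb Y p B :=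
  sum_congr rfl fun H hH => by simp only [h H (mem_powerset.1 hH)]

lemma bernoulliProb_mono (hp₀ : 0 ≤ p) (hp₁ : p ≤ 1) (h : ∀ H ⊆ Y, A H → B H) :
    bernoulliProb Y p A ≤ bernoulliProb Y p B := by
  refine sum_le_sum fun H hH => ?_
  by_cases hA : A H
  · rw [if_pos hA, if_pos (h H (mem_powerset.1 hH) hA)]
  · rw [if_neg hA]
    exact ite_nonneg (bernoulliWeight_nonneg hp₀ hp₁ H) le_rfl

lemma sum_bernoulliWeight : ∑ H ∈ Y.powerset, bernoulliWeight Y p H = 1 := by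
  simp only [bernoulliWeight, sum_pow_mul_eq_add_pow, add_sub_cancel, one_pow]

lemma sum_Icc_pow_mul_pow {R : Type*} [CommSemiring R] [DecidableEq α] (hMY : M ⊆ Y) (a b : R) :
    ∑ H ∈ Icc M Y, a ^ (#H - #M) * b ^ (#Y - #H) = (a + b) ^ (#Y - #M) := by
  have hdisj : ∀ Z ∈ (Y \ M).powerset, Disjoint M Z := fun Z hZ =>
    disjoint_of_subset_right (mem_powerset.1 hZ) disjoint_sdiff
  have hinj : Set.InjOn (M ∪ ·) ((Y \ M).powerset : Set (Finset α)) := fun Z hZ W hW hZW => by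
    rw [← union_sdiff_cancel_left (hdisj Z hZ), ← union_sdiff_cancel_left (hdisj W hW)]
    exact congrArg (· \ M) hZW
  rw [Icc_eq_image_powerset hMY, sum_image hinj, ← card_sdiff_of_subset hMY,
    ← sum_pow_mul_eq_add_pow]
  refine sum_congr rfl fun Z hZ => ?_
  rw [card_union_of_disjoint (hdisj Z hZ), card_sdiff_of_subset hMY, Nat.add_sub_cancel_left,
    Nat.sub_sub]

lemma bernoulliProb_superset (hMY : M ⊆ Y) : bernoulliProb Y p (M ⊆ ·) = p ^ #M := by
  classical
  calc bernoulliProb Y p (M ⊆ ·)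
      = ∑ H ∈ Icc M Y, bernoulliWeight Y p H := by
        rw [Icc_eq_filter_powerset, sum_filter]
        exact sum_congr rfl fun H _ => by congr
    _ = ∑ H ∈ Icc M Y, p ^ #M * (p ^ (#H - #M) * (1 - p) ^ (#Y - #H)) := by
        refine sum_congr rfl fun H hH => ?_
        rw [bernoulliWeight, ← mul_assoc, pow_mul_pow_sub _ (card_le_card (mem_Icc.1 hH).1)]
    _ = p ^ #M := by
        rw [← mul_sum, sum_Icc_pow_mul_pow hMY, add_sub_cancel, one_pow, mul_one]

lemma sum_card_mul_bernoulliWeight :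
    ∑ H ∈ Y.powerset, #H * bernoulliWeight Y p H = #Y * p := by
  classical
  calc ∑ H ∈ Y.powerset, #H * bernoulliWeight Y p H
      = ∑ H ∈ Y.powerset, ∑ y ∈ Y, if {y} ⊆ H then bernoulliWeight Y p H else 0 := by
        refine sum_congr rfl fun H hH => ?_
        simp only [singleton_subset_iff]
        rw [← sum_filter, sum_const, nsmul_eq_mul, filter_mem_eq_inter,
          inter_eq_right.2 (mem_powerset.1 hH)]
    _ = ∑ y ∈ Y, bernoulliProb Y p ({y} ⊆ ·) := by
        rw [sum_comm]
        exact sum_congr rfl fun y _ => sum_congr rfl fun H _ => by congr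
    _ = #Y * p := by
        rw [← nsmul_eq_mul, ← sum_const]
        exact sum_congr rfl fun y hy => by
          rw [bernoulliProb_superset (singleton_subset_iff.2 hy), card_singleton, pow_one]

lemma bernoulliProb_disjoint_and [DecidableEq α] (hDY : D ⊆ Y) :
    bernoulliProb Y p (fun H => Disjoint H D ∧ A H) =
      (1 - p) ^ #D * bernoulliProb (Y \ D) p A := by
  rw [bernoulliProb, ← sum_subset (powerset_mono.2 sdiff_subset), bernoulliProb, mul_sum]
  · refine sum_congr rfl fun H hH => ?_
    have hHD : H ⊆ Y \ D := mem_powerset.1 hH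
    have hcard : #Y - #H = #D + (#(Y \ D) - #H) := by
      have := card_le_card hHD
      have := card_sdiff_add_card_eq_card hDY
      omega
    simp only [(subset_sdiff.1 hHD).2, true_and, mul_ite, mul_zero, bernoulliWeight, hcard,
      pow_add, mul_left_comm]
  · intro H hHY hHD
    rw [mem_powerset, subset_sdiff] at hHD
    exact if_neg fun h => hHD ⟨mem_powerset.1 hHY, h.1⟩

lemma one_sub_sum_bernoulliProb_le {ι : Type*} (s : Finset ι) (A : ι → Finset α → Prop)
    (hp₀ : 0 ≤ p) (hp₁ : p ≤ 1) (h : ∀ H ⊆ Y, ¬ B H → ∃ i ∈ s, A i H) :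
    1 - ∑ i ∈ s, bernoulliProb Y p (A i) ≤ bernoulliProb Y p B := by
  have hw := bernoulliWeight_nonneg (Y := Y) hp₀ hp₁
  simp only [bernoulliProb]
  rw [sub_le_iff_le_add, ← sum_bernoulliWeight (Y := Y) (p := p), sum_comm, ← sum_add_distrib]
  refine sum_le_sum fun H hH => ?_
  have hnonneg : ∀ i ∈ s, 0 ≤ if A i H then bernoulliWeight Y p H else 0 := fun i _ =>
    ite_nonneg (hw H) le_rfl
  by_cases hB : B H
  · rw [if_pos hB]
    exact le_add_of_nonneg_right (sum_nonneg hnonneg)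
  · obtain ⟨i, his, hi⟩ := h H (mem_powerset.1 hH) hB
    rw [if_neg hB, zero_add]
    exact (if_pos hi).ge.trans (single_le_sum hnonneg his)

lemma sum_bernoulliProb_le_card_mul {ι : Type*} (s : Finset ι) (A : ι → Finset α → Prop)
    (hp₀ : 0 ≤ p) (hp₁ : p ≤ 1) (h : ∀ H ⊆ Y, #{i ∈ s | A i H} ≤ #H) :
    ∑ i ∈ s, bernoulliProb Y p (A i) ≤ #Y * p := by
  simp only [bernoulliProb]
  rw [← sum_card_mul_bernoulliWeight, sum_comm]
  refine sum_le_sum fun H hH => ?_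
  rw [← sum_filter, sum_const, nsmul_eq_mul]
  exact mul_le_mul_of_nonneg_right (mod_cast h H (mem_powerset.1 hH))
    (bernoulliWeight_nonneg hp₀ hp₁ H)

lemma bernoulliWeight_mul [DecidableEq α] (hMY : M ⊆ Y) :
    bernoulliWeight Y (p * q) M =
      ∑ H ∈ Icc M Y, bernoulliWeight Y p H * bernoulliWeight H q M := by
  have hsplit : 1 - p * q = p * (1 - q) + (1 - p) := by ring
  rw [bernoulliWeight, hsplit, ← sum_Icc_pow_mul_pow hMY, mul_sum]
  refine sum_congr rfl fun H hH => ?_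
  rw [bernoulliWeight, bernoulliWeight, ← pow_mul_pow_sub p (card_le_card (mem_Icc.1 hH).1),
    mul_pow p q, mul_pow p (1 - q)]
  ring

-- Keeping the elements of a `p`-random subset with probability `q` gives a `p * q`-random subset.
lemma bernoulliProb_mul :
    bernoulliProb Y (p * q) A =
      ∑ H ∈ Y.powerset, bernoulliWeight Y p H * bernoulliProb H q A := by
  classical
  calc bernoulliProb Y (p * q) A
      = ∑ M ∈ Y.powerset, ∑ H ∈ Icc M Y,
          if A M then bernoulliWeight Y p H * bernoulliWeight H q M else 0 := by
        refine sum_congr rfl fun M hM => ?_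
        rw [bernoulliWeight_mul (mem_powerset.1 hM)]
        split_ifs <;> simp only [sum_const_zero]
    _ = ∑ H ∈ Y.powerset, ∑ M ∈ H.powerset,
          if A M then bernoulliWeight Y p H * bernoulliWeight H q M else 0 := by
        refine sum_comm' fun M H => ?_
        simp only [mem_powerset, mem_Icc]
        exact ⟨fun h => h.2, fun h => ⟨h.1.trans h.2, h⟩⟩
    _ = ∑ H ∈ Y.powerset, bernoulliWeight Y p H * bernoulliProb H q A := by
        simp only [bernoulliProb, mul_sum, mul_ite, mul_zero]

-- A witness `M` of `A` inside the `p`-random subset survives thinning with probability `q ^ #M`.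
lemma pow_mul_bernoulliProb_le {s : ℕ} (hA : Monotone A)
    (hwitness : ∀ H ⊆ Y, A H → ∃ M ⊆ H, A M ∧ #M ≤ s)
    (hp₀ : 0 ≤ p) (hp₁ : p ≤ 1) (hq₀ : 0 ≤ q) (hq₁ : q ≤ 1) :
    q ^ s * bernoulliProb Y p A ≤ bernoulliProb Y (p * q) A := by
  rw [bernoulliProb_mul, bernoulliProb, mul_sum]
  refine sum_le_sum fun H hH => ?_
  split_ifs with hAH
  · obtain ⟨M, hMH, hAM, hMs⟩ := hwitness H (mem_powerset.1 hH) hAH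
    rw [mul_comm]
    refine mul_le_mul_of_nonneg_left ?_ (bernoulliWeight_nonneg hp₀ hp₁ H)
    calc q ^ s ≤ q ^ #M := pow_le_pow_of_le_one hq₀ hq₁ hMs
      _ = bernoulliProb H q (M ⊆ ·) := (bernoulliProb_superset hMH).symm
      _ ≤ bernoulliProb H q A := bernoulliProb_mono hq₀ hq₁ fun T _ hMT => hA hMT hAM
  · rw [mul_zero]
    exact mul_nonneg (bernoulliWeight_nonneg hp₀ hp₁ H) (bernoulliProb_nonneg hq₀ hq₁)

end BernoulliSubset

section JComponents

open Finset

variable {n j k : ℕ} {H H' C C₁ C₂ D M : Finset (Finset (Fin n))} {J J' J₁ J₂ J₃ e : Finset (Fin n)}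

lemma JConn.mono (hHH' : H ⊆ H') (h : JConn j H J₁ J₂) : JConn j H' J₁ J₂ := by
  obtain ⟨e₁, he₁, e₂, he₂, hJ₁, hJ₂, hwalk⟩ := h
  exact ⟨e₁, hHH' he₁, e₂, hHH' he₂, hJ₁, hJ₂,
    Relation.ReflTransGen.mono (fun _ _ h => ⟨hHH' h.1, hHH' h.2.1, h.2.2⟩) _ _ hwalk⟩

lemma JConn.symm (h : JConn j H J₁ J₂) : JConn j H J₂ J₁ := by
  obtain ⟨e₁, he₁, e₂, he₂, hJ₁, hJ₂, hwalk⟩ := h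
  refine ⟨e₂, he₂, e₁, he₁, hJ₂, hJ₁,
    Relation.ReflTransGen.mono (fun e f h => ?_) _ _ (Relation.reflTransGen_swap.2 hwalk)⟩
  exact ⟨h.2.1, h.1, by rw [inter_comm]; exact h.2.2⟩

lemma JConn.trans (hcard : #J₂ = j) (h₁₂ : JConn j H J₁ J₂) (h₂₃ : JConn j H J₂ J₃) :
    JConn j H J₁ J₃ := by
  obtain ⟨e₁, he₁, e₂, he₂, hJ₁, hJ₂, hwalk⟩ := h₁₂
  obtain ⟨f₁, hf₁, f₂, hf₂, hJ₂', hJ₃, hwalk'⟩ := h₂₃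
  refine ⟨e₁, he₁, f₂, hf₂, hJ₁, hJ₃, (hwalk.tail ⟨he₂, hf₁, ?_⟩).trans hwalk'⟩
  exact hcard.symm.le.trans (card_le_card (subset_inter hJ₂ hJ₂'))

lemma jConn_of_subset_edge (he : e ∈ H) (hJ₁ : J₁ ⊆ e) (hJ₂ : J₂ ⊆ e) : JConn j H J₁ J₂ :=
  ⟨e, he, e, he, hJ₁, hJ₂, .refl⟩

/-- The sets in `C` are pairwise `j`-connected in the hypergraph with edge set `H`. -/
def JConnFamily (j : ℕ) (H C : Finset (Finset (Fin n))) : Prop :=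
  ∀ J₁ ∈ C, ∀ J₂ ∈ C, JConn j H J₁ J₂

lemma JConnFamily.mono (hHH' : H ⊆ H') (h : JConnFamily j H C) : JConnFamily j H' C :=
  fun J₁ hJ₁ J₂ hJ₂ => (h J₁ hJ₁ J₂ hJ₂).mono hHH'

lemma jConnFamily_singleton (hJ : J ⊆ e) : JConnFamily j {e} {J} := by
  simp only [JConnFamily, mem_singleton, forall_eq]
  exact jConn_of_subset_edge (mem_singleton_self e) hJ hJ

lemma JConnFamily.insert_edge (h : JConnFamily j M D) (hJD : J ∈ D) (hcard : #J = j) (hJe : J ⊆ e)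
    (hJ'e : J' ⊆ e) : JConnFamily j (insert e M) (insert J' D) := by
  have hold := h.mono (subset_insert e M)
  have hnew : ∀ J₁ ∈ D, JConn j (insert e M) J₁ J' := fun J₁ hJ₁ =>
    (hold J₁ hJ₁ J hJD).trans hcard (jConn_of_subset_edge (mem_insert_self e M) hJe hJ'e)
  intro J₁ h₁ J₂ h₂
  obtain rfl | hJ₁ := mem_insert.1 h₁ <;> obtain rfl | hJ₂ := mem_insert.1 h₂
  · exact jConn_of_subset_edge (mem_insert_self e M) hJ'e hJ'e
  · exact (hnew J₂ hJ₂).symm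
  · exact hnew J₁ hJ₁
  · exact hold J₁ hJ₁ J₂ hJ₂

/-- A vertex set `K` is mixed with respect to a family `C` of `j`-sets if it contains both a
member of `C` and a `j`-set outside `C`; no edge may be mixed if `C` is to be a `j`-component. -/
def IsMixed {V : Type*} (j : ℕ) (C : Finset (Finset V)) (K : Finset V) : Prop :=
  (∃ J ∈ C, J ⊆ K) ∧ ∃ J, #J = j ∧ J ⊆ K ∧ J ∉ C

lemma JConn.mem_of_forall_not_isMixed (hH : ∀ e ∈ H, ¬ IsMixed j C e) (hJ₁ : J₁ ∈ C)
    (hJ₂ : #J₂ = j) (h : JConn j H J₁ J₂) : J₂ ∈ C := by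
  have hclosed : ∀ e ∈ H, (∃ J ∈ C, J ⊆ e) → ∀ J, #J = j → J ⊆ e → J ∈ C :=
    fun e he hC J hJ hJe => by_contra fun hJC => hH e he ⟨hC, J, hJ, hJe, hJC⟩
  obtain ⟨e₁, -, e₂, he₂, hJ₁e₁, hJ₂e₂, hwalk⟩ := h
  suffices ∃ J ∈ C, J ⊆ e₂ from hclosed e₂ he₂ this J₂ hJ₂ hJ₂e₂
  clear he₂ hJ₂e₂
  induction hwalk with
  | refl => exact ⟨J₁, hJ₁, hJ₁e₁⟩
  | tail _ hstep ih =>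
    obtain ⟨he, -, hinter⟩ := hstep
    obtain ⟨J, hJ, hJcard⟩ := exists_subset_card_eq hinter
    exact ⟨J, hclosed _ he ih J hJcard (hJ.trans inter_subset_left), hJ.trans inter_subset_right⟩

lemma isJComponent_iff :
    IsJComponent n j H C ↔
      C.Nonempty ∧ (∀ J ∈ C, #J = j) ∧ (∀ e ∈ H, ¬ IsMixed j C e) ∧ JConnFamily j H C := by
  constructor
  · rintro ⟨hne, hcard, hconn, hmax⟩
    refine ⟨hne, hcard, ?_, hconn⟩
    rintro e he ⟨⟨J, hJ, hJe⟩, J', hJ', hJ'e, hJ'C⟩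
    exact hJ'C (hmax J' hJ' ⟨J, hJ, jConn_of_subset_edge he hJ'e hJe⟩)
  · rintro ⟨hne, hcard, hmixed, hconn⟩
    refine ⟨hne, hcard, hconn, ?_⟩
    rintro J hJ ⟨J', hJ', h⟩
    exact h.symm.mem_of_forall_not_isMixed hmixed hJ' hJ

lemma IsJComponent.mem_of_subset_edge (h : IsJComponent n j H C) (he : e ∈ H) (hJ : J ∈ C)
    (hJe : J ⊆ e) (hJ' : #J' = j) (hJ'e : J' ⊆ e) : J' ∈ C :=
  h.2.2.2 J' hJ' ⟨J, hJ, jConn_of_subset_edge he hJ'e hJe⟩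

lemma IsJComponent.exists_subset_edge (h : IsJComponent n j H C) : ∃ e ∈ H, ∃ J ∈ C, J ⊆ e := by
  obtain ⟨⟨J, hJ⟩, -, hconn, -⟩ := h
  obtain ⟨e, he, -, -, hJe, -⟩ := hconn J hJ J hJ
  exact ⟨e, he, J, hJ, hJe⟩

lemma IsJComponent.eq_of_mem (h₁ : IsJComponent n j H C₁) (h₂ : IsJComponent n j H C₂)
    (hJ₁ : J ∈ C₁) (hJ₂ : J ∈ C₂) : C₁ = C₂ := by
  have hsub : ∀ {C C' : Finset (Finset (Fin n))}, IsJComponent n j H C → IsJComponent n j H C' →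
      J ∈ C → J ∈ C' → C ⊆ C' := fun h h' hJ hJ' J' hJ'C =>
    h'.2.2.2 J' (h.2.1 J' hJ'C) ⟨J, hJ', h.2.2.1 J' hJ'C J hJ⟩
  exact (hsub h₁ h₂ hJ₁ hJ₂).antisymm (hsub h₂ h₁ hJ₂ hJ₁)

lemma IsJComponent.exists_edge_leaving (h : IsJComponent n j H C) (hDC : D ⊂ C)
    (hD : D.Nonempty) : ∃ e ∈ H, ∃ J ∈ D, ∃ J' ∈ C, J' ∉ D ∧ J ⊆ e ∧ J' ⊆ e := by
  have hmixed : ∃ e ∈ H, IsMixed j D e := by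
    by_contra! hH
    obtain ⟨J₁, hJ₁⟩ := hD
    exact hDC.2 fun J₂ hJ₂ => (h.2.2.1 J₁ (hDC.1 hJ₁) J₂ hJ₂).mem_of_forall_not_isMixed hH hJ₁
      (h.2.1 J₂ hJ₂)
  obtain ⟨e, he, ⟨J, hJ, hJe⟩, J', hJ', hJ'e, hJ'D⟩ := hmixed
  exact ⟨e, he, J, hJ, J', h.mem_of_subset_edge he (hDC.1 hJ) hJe hJ' hJ'e, hJ'D, hJe, hJ'e⟩

lemma IsJComponent.exists_jConnFamily_card_le (h : IsJComponent n j H C) :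
    ∃ M ⊆ H, JConnFamily j M C ∧ #M ≤ #C := by
  have hgrow : ∀ m, 1 ≤ m → m ≤ #C →
      ∃ D ⊆ C, #D = m ∧ ∃ M ⊆ H, JConnFamily j M D ∧ #M ≤ m := by
    intro m hm
    induction m, hm using Nat.le_induction with
    | base =>
      intro _
      obtain ⟨e, he, J, hJ, hJe⟩ := h.exists_subset_edge
      exact ⟨{J}, singleton_subset_iff.2 hJ, card_singleton J, {e}, singleton_subset_iff.2 he,
        jConnFamily_singleton hJe, (card_singleton e).le⟩
    | succ m hm ih =>
      intro hmC
      obtain ⟨D, hDC, hDm, M, hMH, hMD, hMm⟩ := ih (by lia)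
      have hssub : D ⊂ C := hDC.ssubset_of_ne (by rintro rfl; lia)
      obtain ⟨e, he, J, hJ, J', hJ'C, hJ'D, hJe, hJ'e⟩ :=
        h.exists_edge_leaving hssub (card_pos.1 (by lia))
      refine ⟨insert J' D, insert_subset hJ'C hDC, by rw [card_insert_of_notMem hJ'D, hDm],
        insert e M, insert_subset he hMH, hMD.insert_edge hJ (h.2.1 J (hDC hJ)) hJe hJ'e, ?_⟩
      exact (card_insert_le e M).trans (Nat.succ_le_succ hMm)
  obtain ⟨D, hDC, hcard, M, hMH, hM⟩ := hgrow #C (card_pos.2 h.1) le_rfl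
  obtain rfl := eq_of_subset_of_card_le hDC hcard.ge
  exact ⟨M, hMH, hM⟩

lemma IsJComponent.choose_le_card (hH : H ⊆ kSets n k) (h : IsJComponent n j H C) :
    k.choose j ≤ #C := by
  obtain ⟨e, he, J, hJ, hJe⟩ := h.exists_subset_edge
  rw [← (mem_powersetCard.1 (hH he)).2, ← card_powersetCard]
  refine card_le_card fun J' hJ' => ?_
  rw [mem_powersetCard] at hJ'
  exact h.mem_of_subset_edge he hJ hJe hJ'.2 hJ'.1

lemma card_filter_isJComponent_le (s : Finset (Finset (Finset (Fin n)))) :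
    #{C ∈ s | IsJComponent n j H C} ≤ #H := by
  refine card_le_card_of_forall_subsingleton (fun C e => ∃ J ∈ C, J ⊆ e) ?_ ?_
  · exact fun C hC => (mem_filter.1 hC).2.exists_subset_edge
  · rintro e he C₁ ⟨hC₁, J₁, hJ₁, hJ₁e⟩ C₂ ⟨hC₂, J₂, hJ₂, hJ₂e⟩
    have h₁ := (mem_filter.1 hC₁).2
    have h₂ := (mem_filter.1 hC₂).2
    exact h₁.eq_of_mem h₂ (h₁.mem_of_subset_edge he hJ₁ hJ₁e (h₂.2.1 J₂ hJ₂) hJ₂e) hJ₂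

end JComponents

section Isoperimetry

open Finset

variable {V : Type*} {n j k r : ℕ}

-- Exchange step: a member of `C` inside `R` that is as close as possible to a `j`-set of `R`
-- outside `C` leaves `C` when one of its elements is swapped towards that set.
lemma IsMixed.exists_insert {C : Finset (Finset V)} {R : Finset V} (hR : IsMixed j C R)
    (hC : ∀ J ∈ C, #J = j) : ∃ J ∈ C, ∃ x ∉ J, insert x J ⊆ R ∧ IsMixed j C (insert x J) := by
  obtain ⟨⟨J₀, hJ₀, hJ₀R⟩, J', hJ', hJ'R, hJ'C⟩ := hR
  obtain ⟨J, hJ, hmax⟩ := exists_max_image {J ∈ C | J ⊆ R} (fun J => #(J ∩ J'))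
    ⟨J₀, mem_filter.2 ⟨hJ₀, hJ₀R⟩⟩
  obtain ⟨hJC, hJR⟩ := mem_filter.1 hJ
  obtain ⟨x, hx⟩ : (J' \ J).Nonempty := by
    rw [sdiff_nonempty]
    exact fun hsub => hJ'C (eq_of_subset_of_card_le hsub (by rw [hC J hJC, hJ']) ▸ hJC)
  obtain ⟨y, hy⟩ : (J \ J').Nonempty := by
    rw [← card_pos, card_sdiff_comm ((hC J hJC).trans hJ'.symm)]
    exact card_pos.2 ⟨x, hx⟩
  rw [Finset.mem_sdiff] at hx hy
  have hinsert : insert x J ⊆ R := insert_subset (hJ'R hx.1) hJR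
  set J₂ := insert x (J.erase y) with hJ₂
  have hJ₂sub : J₂ ⊆ insert x J := insert_subset_insert x (erase_subset y J)
  have hJ₂card : #J₂ = j := by
    rw [hJ₂, card_insert_of_notMem fun h => hx.2 (mem_of_mem_erase h),
      card_erase_add_one hy.1, hC J hJC]
  have hcloser : #(J ∩ J') < #(J₂ ∩ J') := by
    refine card_lt_card ((ssubset_iff_of_subset ?_).2 ⟨x, ?_, ?_⟩)
    · exact subset_inter (fun z hz => mem_insert_of_mem (mem_erase.2
        ⟨fun hzy => hy.2 (hzy ▸ (mem_inter.1 hz).2), (mem_inter.1 hz).1⟩)) inter_subset_right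
    · exact mem_inter.2 ⟨mem_insert_self x _, hx.1⟩
    · exact fun h => hx.2 (mem_inter.1 h).1
  have hJ₂C : J₂ ∉ C := fun h =>
    (hmax J₂ (mem_filter.2 ⟨h, hJ₂sub.trans hinsert⟩)).not_gt hcloser
  exact ⟨J, hJC, x, hx.2, hinsert, ⟨J, hJC, subset_insert x J⟩, J₂, hJ₂card, hJ₂sub, hJ₂C⟩

lemma IsMixed.mono {C : Finset (Finset V)} {K R : Finset V} (hKR : K ⊆ R)
    (hK : IsMixed j C K) : IsMixed j C R := by
  obtain ⟨⟨J, hJ, hJK⟩, J', hJ', hJ'K, hJ'C⟩ := hK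
  exact ⟨⟨J, hJ, hJK.trans hKR⟩, J', hJ', hJ'K.trans hKR, hJ'C⟩

lemma IsMixed.exists_subset_card_eq {C : Finset (Finset V)} {R : Finset V}
    (hR : IsMixed j C R) (hC : ∀ J ∈ C, #J = j) (hjk : j < k) (hk : k ≤ #R) :
    ∃ K ⊆ R, #K = k ∧ IsMixed j C K := by
  obtain ⟨J, hJ, x, hx, hsub, hmixed⟩ := hR.exists_insert hC
  obtain ⟨K, hK, hKR, hKcard⟩ := exists_subsuperset_card_eq hsub
    (by rw [card_insert_of_notMem hx, hC J hJ]; lia) hk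
  exact ⟨K, hKR, hKcard, hmixed.mono hK⟩

lemma isMixed_union_of_disjoint [DecidableEq V] {C : Finset (Finset V)} {J T : Finset V}
    (hJ : J ∈ C) (hT : T.Nonempty) (hdisj : Disjoint T (C.biUnion id)) (hj : 1 ≤ j)
    (hcard : j ≤ #(J ∪ T)) :
    IsMixed j C (J ∪ T) := by
  obtain ⟨t, ht⟩ := hT
  obtain ⟨J', htJ', hJ', hJ'card⟩ := exists_subsuperset_card_eq
    (singleton_subset_iff.2 (mem_union_right J ht)) ((card_singleton t).trans_le hj) hcard
  refine ⟨⟨J, hJ, subset_union_left⟩, J', hJ'card, hJ', fun hJ'C => ?_⟩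
  exact disjoint_left.1 hdisj ht (mem_biUnion.2 ⟨J', hJ'C, singleton_subset_iff.1 htJ'⟩)

/-- The `r`-sets of vertices that are mixed with respect to the family `C` of `j`-sets. -/
def mixedSets (r j : ℕ) (C : Finset (Finset (Fin n))) : Finset (Finset (Fin n)) :=
  {K ∈ kSets n r | IsMixed j C K}

variable {C : Finset (Finset (Fin n))}

lemma mixedSets_subset_kSets : mixedSets r j C ⊆ kSets n r :=
  filter_subset _ _

lemma mem_kSets {A : Finset (Fin n)} : A ∈ kSets n r ↔ #A = r :=
  mem_powersetCard_univ

lemma card_kSets : #(kSets n r) = n.choose r := by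
  rw [kSets, card_powersetCard, card_univ, Fintype.card_fin]

lemma mem_mixedSets {K : Finset (Fin n)} : K ∈ mixedSets r j C ↔ #K = r ∧ IsMixed j C K := by
  rw [mixedSets, mem_filter, mem_kSets]

lemma card_filter_kSets_superset {A : Finset (Fin n)} (hA : #A ≤ r) :
    #{R ∈ kSets n r | A ⊆ R} = (n - #A).choose (r - #A) := by
  rw [kSets, card_filter_powersetCard_subset A univ r (subset_univ A) hA, card_univ,
    Fintype.card_fin]

lemma choose_le_choose_add (a b t : ℕ) : a.choose b ≤ (a + t).choose (b + t) := by
  induction t with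
  | zero => rfl
  | succ t ih => exact ih.trans (Nat.choose_succ_succ (a + t) (b + t) ▸ Nat.le_add_right _ _)

lemma card_mul_card_mul_choose_le_card_mixedSets (hC : ∀ J ∈ C, #J = j) (hjr : 2 * j ≤ r)
    (hrn : r ≤ n) :
    #C * (n.choose j - #C) * (n - 2 * j).choose (r - 2 * j) ≤
      #(mixedSets r j C) * (r.choose j * r.choose j) := by
  have hCsub : C ⊆ kSets n j := fun J hJ => mem_kSets.2 (hC J hJ)
  rw [← card_kSets, ← card_sdiff_of_subset hCsub, ← card_product]
  refine card_mul_le_card_mul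
    (fun (P : Finset (Fin n) × Finset (Fin n)) R => P.1 ∪ P.2 ⊆ R) ?_ ?_
  · rintro ⟨J, J'⟩ hJJ'
    obtain ⟨hJ, hJ'⟩ := mem_product.1 hJJ'
    obtain ⟨hJ', hJ'C⟩ := mem_sdiff.1 hJ'
    have hcard : #(J ∪ J') ≤ 2 * j := by
      have := card_union_le J J'
      rw [hC J hJ, mem_kSets.1 hJ'] at this
      lia
    calc (n - 2 * j).choose (r - 2 * j)
        ≤ (n - 2 * j + (2 * j - #(J ∪ J'))).choose (r - 2 * j + (2 * j - #(J ∪ J'))) :=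
          choose_le_choose_add _ _ _
      _ = #{R ∈ kSets n r | J ∪ J' ⊆ R} := by
          rw [card_filter_kSets_superset (hcard.trans hjr)]
          congr 1 <;> lia
      _ ≤ _ := by
          refine card_le_card fun R hR => ?_
          obtain ⟨hRcard, hsub⟩ := mem_filter.1 hR
          refine (mem_bipartiteAbove _).2 ⟨mem_mixedSets.2 ⟨mem_kSets.1 hRcard, ?_⟩, hsub⟩
          exact ⟨⟨J, hJ, subset_union_left.trans hsub⟩, J', mem_kSets.1 hJ',
            subset_union_right.trans hsub, hJ'C⟩
  · intro R hR
    rw [← (mem_mixedSets.1 hR).1, ← card_powersetCard, ← card_product]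
    refine card_le_card ?_
    rintro ⟨J, J'⟩ h
    obtain ⟨hJJ', hsub⟩ := (mem_bipartiteBelow _).1 h
    obtain ⟨hJ, hJ'⟩ := mem_product.1 hJJ'
    exact mem_product.2 ⟨mem_powersetCard.2 ⟨subset_union_left.trans hsub, hC J hJ⟩,
      mem_powersetCard.2 ⟨subset_union_right.trans hsub, mem_kSets.1 (mem_sdiff.1 hJ').1⟩⟩

lemma card_mixedSets_le_card_mixedSets_mul_choose (hC : ∀ J ∈ C, #J = j) (hjk : j < k)
    (hkr : k ≤ r) :
    #(mixedSets r j C) ≤ #(mixedSets k j C) * (n - k).choose (r - k) := by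
  rw [← mul_one #(mixedSets r j C)]
  refine card_mul_le_card_mul (fun R K => K ⊆ R) ?_ ?_
  · intro R hR
    obtain ⟨hRcard, hRmixed⟩ := mem_mixedSets.1 hR
    obtain ⟨K, hKR, hK⟩ := hRmixed.exists_subset_card_eq hC hjk (hkr.trans hRcard.ge)
    exact card_pos.2 ⟨K, (mem_bipartiteAbove _).2 ⟨mem_mixedSets.2 hK, hKR⟩⟩
  · intro K hK
    have hKcard := (mem_mixedSets.1 hK).1
    rw [← hKcard, ← card_filter_kSets_superset (hKcard.trans_le hkr)]
    exact card_le_card (filter_subset_filter _ mixedSets_subset_kSets)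

lemma card_mul_choose_le_two_mul_card_mixedSets (hC : ∀ J ∈ C, #J = j) (hjk : j < k)
    (hn : k + j ≤ n) (hhalf : 2 * #C ≤ n.choose j) :
    #C * (n - 2 * j).choose (k - j) ≤
      2 * ((k + j).choose j * (k + j).choose j) * #(mixedSets k j C) := by
  set a := (k + j).choose j
  have hpairs := card_mul_card_mul_choose_le_card_mixedSets hC (r := k + j) (by lia) hn
  have hshrink := card_mixedSets_le_card_mixedSets_mul_choose hC hjk (k.le_add_right j)
  rw [show k + j - 2 * j = k - j by lia] at hpairs
  rw [Nat.add_sub_cancel_left] at hshrink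
  have hpos : 0 < n.choose j := Nat.choose_pos (by lia)
  refine Nat.le_of_mul_le_mul_left ?_ hpos
  calc n.choose j * (#C * (n - 2 * j).choose (k - j))
      ≤ 2 * (n.choose j - #C) * (#C * (n - 2 * j).choose (k - j)) := by gcongr; lia
    _ = 2 * (#C * (n.choose j - #C) * (n - 2 * j).choose (k - j)) := by ring
    _ ≤ 2 * (#(mixedSets k j C) * n.choose j * (a * a)) := by
        refine Nat.mul_le_mul_left 2 (hpairs.trans (Nat.mul_le_mul_right _ (hshrink.trans ?_)))
        exact Nat.mul_le_mul_left _ (Nat.choose_le_choose j (Nat.sub_le n k))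
    _ = n.choose j * (2 * (a * a) * #(mixedSets k j C)) := by ring

lemma card_mul_choose_sub_le_card_mixedSets (hC : ∀ J ∈ C, #J = j) (hj : 1 ≤ j) (hjk : j < k) :
    #C * (n - #C * j).choose (k - j) ≤ #(mixedSets k j C) := by
  set U := C.biUnion id
  have hUcard : #U ≤ #C * j := card_biUnion_le_card_mul C id j fun J hJ => (hC J hJ).le
  have hdisj : ∀ J ∈ C, ∀ T ⊆ Uᶜ, Disjoint J T := fun J hJ T hT =>
    disjoint_of_subset_left (subset_biUnion_of_mem id hJ)
      (disjoint_of_subset_right hT disjoint_compl_right)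
  rw [← mul_one #(mixedSets k j C)]
  refine card_mul_le_card_mul (fun J K => K ∩ U = J) (fun J hJ => ?_) (fun K _ => ?_)
  · calc (n - #C * j).choose (k - j)
        ≤ #(powersetCard (k - j) Uᶜ) := by
          rw [card_powersetCard, card_compl, Fintype.card_fin]
          exact Nat.choose_le_choose _ (Nat.sub_le_sub_left hUcard n)
      _ = #((powersetCard (k - j) Uᶜ).image (J ∪ ·)) := by
          refine (card_image_of_injOn fun T hT T' hT' h => ?_).symm
          rw [← union_sdiff_cancel_left (hdisj J hJ T (mem_powersetCard.1 hT).1),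
            ← union_sdiff_cancel_left (hdisj J hJ T' (mem_powersetCard.1 hT').1)]
          exact congrArg (· \ J) h
      _ ≤ _ := by
          refine card_le_card fun K hK => ?_
          obtain ⟨T, hT, rfl⟩ := mem_image.1 hK
          obtain ⟨hTU, hTcard⟩ := mem_powersetCard.1 hT
          have hJT : #(J ∪ T) = k := by
            rw [card_union_of_disjoint (hdisj J hJ T hTU), hC J hJ, hTcard]
            lia
          have hTdisj : Disjoint T U := disjoint_of_subset_left hTU disjoint_compl_left
          refine (mem_bipartiteAbove _).2 ⟨mem_mixedSets.2 ⟨hJT, ?_⟩, ?_⟩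
          · exact isMixed_union_of_disjoint hJ (card_pos.1 (by lia)) hTdisj hj (by lia)
          · have hJU : J ⊆ U := subset_biUnion_of_mem id hJ
            rw [union_inter_distrib_right, inter_eq_left.2 hJU,
              disjoint_iff_inter_eq_empty.1 hTdisj, union_empty]
  · exact card_le_one.2 fun J hJ J' hJ' =>
      ((mem_bipartiteBelow _).1 hJ).2.symm.trans ((mem_bipartiteBelow _).1 hJ').2

end Isoperimetry

section ExpectedComponents

open Finset

variable {n j k : ℕ} {p q ε : ℝ} {C H : Finset (Finset (Fin n))}

lemma binomProb_isJComponent (hne : C.Nonempty) (hC : ∀ J ∈ C, #J = j) :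
    binomProb n k p (fun H => IsJComponent n j H C) =
      (1 - p) ^ #(mixedSets k j C) *
        bernoulliProb (kSets n k \ mixedSets k j C) p (fun H => JConnFamily j H C) := by
  rw [← bernoulliProb_disjoint_and mixedSets_subset_kSets]
  refine bernoulliProb_congr fun H hH => ?_
  have hmixed : (∀ e ∈ H, ¬ IsMixed j C e) ↔ Disjoint H (mixedSets k j C) := by
    rw [disjoint_left]
    exact forall₂_congr fun e he => by rw [mem_mixedSets, mem_kSets.1 (hH he), eq_self, true_and]
  rw [isJComponent_iff, hmixed, and_iff_right hne, and_iff_right hC]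

lemma binomProb_isJComponent_le (hne : C.Nonempty) (hC : ∀ J ∈ C, #J = j)
    (hp₀ : 0 ≤ p) (hp₁ : p ≤ 1) (hq₀ : 0 ≤ q) (hq₁ : q ≤ 1) (hε : 0 ≤ ε)
    (h : (1 - p) ^ #(mixedSets k j C) ≤
      ε * (q ^ #C * (1 - p * q) ^ #(mixedSets k j C))) :
    binomProb n k p (fun H => IsJComponent n j H C) ≤
      ε * binomProb n k (p * q) (fun H => IsJComponent n j H C) := by
  set m := #(mixedSets k j C) with hm
  set P : ℝ → ℝ := fun p =>
    bernoulliProb (kSets n k \ mixedSets k j C) p (fun H => JConnFamily j H C)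
  have hpq₁ : p * q ≤ 1 := mul_le_one₀ hp₁ hq₀ hq₁
  have hthin : q ^ #C * P p ≤ P (p * q) := by
    refine pow_mul_bernoulliProb_le (fun H H' hHH' hconn => hconn.mono hHH') ?_ hp₀ hp₁ hq₀ hq₁
    intro H hH hconn
    have hmixed : ∀ e ∈ H, ¬ IsMixed j C e := fun e he hmix =>
      have he' := mem_sdiff.1 (hH he)
      he'.2 (mem_filter.2 ⟨he'.1, hmix⟩)
    exact (isJComponent_iff.2 ⟨hne, hC, hmixed, hconn⟩).exists_jConnFamily_card_le
  rw [binomProb_isJComponent hne hC, binomProb_isJComponent hne hC, ← hm]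
  calc (1 - p) ^ m * P p ≤ ε * (q ^ #C * (1 - p * q) ^ m) * P p :=
        mul_le_mul_of_nonneg_right h (bernoulliProb_nonneg hp₀ hp₁)
    _ = ε * ((1 - p * q) ^ m * (q ^ #C * P p)) := by ring
    _ ≤ ε * ((1 - p * q) ^ m * P (p * q)) := by
        gcongr

/-- Any two `j`-components of the hypergraph with edge set `H` that contain at least two `j`-sets
coincide. -/
def AtMostOneNontrivialComponent (n j : ℕ) (H : Finset (Finset (Fin n))) : Prop :=
  ∀ C₁ C₂ : Finset (Finset (Fin n)),
    IsJComponent n j H C₁ → IsJComponent n j H C₂ → 2 ≤ #C₁ → 2 ≤ #C₂ → C₁ = C₂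

/-- The families of `j`-sets that may occur as the smaller of two `j`-components of a `k`-uniform
hypergraph, each spanned by at least one edge. -/
def smallerComponentCandidates (n k j : ℕ) : Finset (Finset (Finset (Fin n))) :=
  {C | (∀ J ∈ C, #J = j) ∧ k.choose j ≤ #C ∧ 2 * #C ≤ n.choose j}

lemma exists_smallerComponentCandidate (hH : H ⊆ kSets n k)
    (h : ¬ AtMostOneNontrivialComponent n j H) :
    ∃ C ∈ smallerComponentCandidates n k j, IsJComponent n j H C := by
  simp only [AtMostOneNontrivialComponent, not_forall] at h
  obtain ⟨C₁, C₂, h₁, h₂, -, -, hne⟩ := h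
  have hdisj : Disjoint C₁ C₂ := disjoint_left.2 fun J hJ₁ hJ₂ => hne (h₁.eq_of_mem h₂ hJ₁ hJ₂)
  have hcard : #C₁ + #C₂ ≤ n.choose j := by
    rw [← card_union_of_disjoint hdisj, ← card_kSets]
    refine card_le_card (union_subset ?_ ?_)
    · exact fun J hJ => mem_kSets.2 (h₁.2.1 J hJ)
    · exact fun J hJ => mem_kSets.2 (h₂.2.1 J hJ)
  obtain hle | hle := le_total #C₁ #C₂
  · exact ⟨C₁, mem_filter.2 ⟨mem_univ _, h₁.2.1, h₁.choose_le_card hH, by lia⟩, h₁⟩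
  · exact ⟨C₂, mem_filter.2 ⟨mem_univ _, h₂.2.1, h₂.choose_le_card hH, by lia⟩, h₂⟩

theorem one_sub_mul_le_binomProb_atMostOneNontrivialComponent (hjk : j ≤ k)
    (hp₀ : 0 ≤ p) (hp₁ : p ≤ 1) (hq₀ : 0 ≤ q) (hq₁ : q ≤ 1) (hε : 0 ≤ ε)
    (h : ∀ C ∈ smallerComponentCandidates n k j,
      (1 - p) ^ #(mixedSets k j C) ≤
        ε * (q ^ #C * (1 - p * q) ^ #(mixedSets k j C))) :
    1 - ε * (n.choose k * (p * q)) ≤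
      binomProb n k p (AtMostOneNontrivialComponent n j) := by
  set s := smallerComponentCandidates n k j
  have hcompare : ∀ C ∈ s, binomProb n k p (fun H => IsJComponent n j H C) ≤
      ε * binomProb n k (p * q) (fun H => IsJComponent n j H C) := by
    intro C hC
    obtain ⟨-, huniform, hlarge, -⟩ := mem_filter.1 hC
    exact binomProb_isJComponent_le (card_pos.1 ((Nat.choose_pos hjk).trans_le hlarge)) huniform
      hp₀ hp₁ hq₀ hq₁ hε (h C hC)
  have hunion : 1 - ∑ C ∈ s, binomProb n k p (fun H => IsJComponent n j H C) ≤
      binomProb n k p (AtMostOneNontrivialComponent n j) :=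
    one_sub_sum_bernoulliProb_le s (fun C H => IsJComponent n j H C) hp₀ hp₁
      fun H => exists_smallerComponentCandidate
  have hedges : ∑ C ∈ s, binomProb n k (p * q) (fun H => IsJComponent n j H C) ≤
      n.choose k * (p * q) := by
    rw [← card_kSets]
    exact sum_bernoulliProb_le_card_mul s (fun C H => IsJComponent n j H C)
      (mul_nonneg hp₀ hq₀) (mul_le_one₀ hp₁ hq₀ hq₁) fun H _ => card_filter_isJComponent_le s
  calc 1 - ε * (n.choose k * (p * q))
      ≤ 1 - ε * ∑ C ∈ s, binomProb n k (p * q) (fun H => IsJComponent n j H C) := by gcongr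
    _ ≤ 1 - ∑ C ∈ s, binomProb n k p (fun H => IsJComponent n j H C) := by
        rw [mul_sum]
        gcongr with C hC
        exact hcompare C hC
    _ ≤ _ := hunion

end ExpectedComponents

section BinomialCoefficients

lemma le_choose {n k : ℕ} (hk : 0 < k) (hkn : k < n) : n ≤ n.choose k := by
  induction n, hkn using Nat.le_induction with
  | base => exact (Nat.choose_succ_self_right k).ge
  | succ n hkn ih =>
    have := Nat.choose_succ_left n k hk
    have := Nat.choose_pos (n := n) (k := k - 1) (by lia)
    lia

lemma choose_le_pow_mul_choose_sub {n j k : ℕ} (hjk : j ≤ k) :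
    n.choose k ≤ n ^ j * n.choose (k - j) :=
  calc n.choose k
      ≤ n.choose k * k.choose (k - j) :=
        Nat.le_mul_of_pos_right _ (Nat.choose_pos (k.sub_le j))
    _ = (n - (k - j)).choose j * n.choose (k - j) := by
        rw [Nat.choose_mul (k.sub_le j), Nat.sub_sub_self hjk, mul_comm]
    _ ≤ n ^ j * n.choose (k - j) :=
        Nat.mul_le_mul_right _ ((Nat.choose_le_choose j (n.sub_le _)).trans (Nat.choose_le_pow n j))

lemma isEquivalent_choose_sub (a m : ℕ) :
    (fun n : ℕ => ((n - a).choose m : ℝ)) ~[atTop] fun n => (n.choose m : ℝ) := by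
  have hsub : (fun n : ℕ => ((n - a : ℕ) : ℝ)) ~[atTop] fun n => (n : ℝ) := by
    have hconst : (fun _ : ℕ => (-a : ℝ)) =o[atTop] fun n : ℕ => (n : ℝ) :=
      isLittleO_const_left.2 (.inr (tendsto_norm_atTop_atTop.comp tendsto_natCast_atTop_atTop))
    refine hconst.congr' ?_ .rfl
    filter_upwards [eventually_ge_atTop a] with n hn
    rw [Pi.sub_apply, Nat.cast_sub hn]
    ring
  have hpow := (hsub.pow m).div (IsEquivalent.refl (u := fun _ => (m.factorial : ℝ)))
  exact ((isEquivalent_choose m).comp_tendsto (tendsto_sub_atTop_nat a)).trans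
    (hpow.trans (isEquivalent_choose m).symm)

lemma eventually_mul_choose_le_choose_sub (a m : ℕ) {δ : ℝ} (hδ : δ < 1) :
    ∀ᶠ n : ℕ in atTop, δ * n.choose m ≤ (n - a).choose m := by
  filter_upwards [(isEquivalent_choose_sub a m).def (sub_pos.2 hδ)] with n hn
  rw [Pi.sub_apply, Real.norm_eq_abs, Real.norm_natCast] at hn
  linarith [neg_le_of_abs_le hn]

end BinomialCoefficients

section EventualIsoperimetry

variable {j k : ℕ}

lemma eventually_mul_le_card_mixedSets_of_card_le (hj : 1 ≤ j) (hjk : j < k) (S : ℕ) {δ : ℝ}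
    (hδ : δ < 1) :
    ∀ᶠ n : ℕ in atTop, ∀ C : Finset (Finset (Fin n)), (∀ J ∈ C, J.card = j) → C.card ≤ S →
      δ * C.card * n.choose (k - j) ≤ (mixedSets k j C).card := by
  filter_upwards [eventually_mul_choose_le_choose_sub (S * j) (k - j) hδ] with n hn C hC hS
  calc δ * C.card * n.choose (k - j)
      = C.card * (δ * n.choose (k - j)) := by ring
    _ ≤ C.card * (n - C.card * j).choose (k - j) := by
        gcongr
        refine hn.trans (mod_cast Nat.choose_le_choose _ ?_)
        exact Nat.sub_le_sub_left (Nat.mul_le_mul_right j hS) n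
    _ ≤ (mixedSets k j C).card := mod_cast card_mul_choose_sub_le_card_mixedSets hC hj hjk

lemma exists_pos_eventually_mul_le_card_mixedSets (hjk : j < k) :
    ∃ c : ℝ, 0 < c ∧ ∀ᶠ n : ℕ in atTop, ∀ C : Finset (Finset (Fin n)),
      (∀ J ∈ C, J.card = j) → 2 * C.card ≤ n.choose j →
        c * C.card * n.choose (k - j) ≤ (mixedSets k j C).card := by
  obtain ⟨a, ha⟩ : ∃ a : ℕ, a = 2 * ((k + j).choose j * (k + j).choose j) := ⟨_, rfl⟩
  have ha₀ : (0 : ℝ) < a := by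
    have : 0 < (k + j).choose j := Nat.choose_pos (Nat.le_add_left j k)
    rw [ha]
    positivity
  refine ⟨1 / 2 / a, by positivity, ?_⟩
  filter_upwards [eventually_mul_choose_le_choose_sub (2 * j) (k - j) one_half_lt_one,
    eventually_ge_atTop (k + j)] with n hn hkn C hC hhalf
  have hiso : C.card * ((n - 2 * j).choose (k - j) : ℝ) ≤ a * (mixedSets k j C).card :=
    mod_cast ha ▸ card_mul_choose_le_two_mul_card_mixedSets hC hjk hkn hhalf
  rw [← mul_le_mul_iff_right₀ ha₀]
  calc (a : ℝ) * (1 / 2 / a * C.card * n.choose (k - j))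
      = C.card * (1 / 2 * n.choose (k - j)) := by field_simp
    _ ≤ C.card * ((n - 2 * j).choose (k - j) : ℝ) := by gcongr
    _ ≤ a * (mixedSets k j C).card := hiso

end EventualIsoperimetry

section ThinningEstimate

open Real

lemma one_sub_mul_pow_le {L r θ : ℝ} {s m : ℕ} (hL : 1 ≤ L) (hr : 0 ≤ r) (hLr : L * r ≤ 1)
    (hm : θ * s ≤ m * r) :
    (1 - L * r) ^ m ≤ exp (-(θ * (L - 1))) ^ s * (1 - r) ^ m := by
  have hr₁ : 0 ≤ 1 - r := by nlinarith
  have hfactor : 1 - L * r ≤ (1 - r) * exp (-((L - 1) * r)) :=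
    calc 1 - L * r ≤ (1 - r) * (1 - (L - 1) * r) := by nlinarith [mul_nonneg hr hr]
      _ ≤ (1 - r) * exp (-((L - 1) * r)) := by
          gcongr
          exact one_sub_le_exp_neg _
  have hexp : exp (-((L - 1) * r)) ^ m ≤ exp (-(θ * (L - 1))) ^ s := by
    rw [← exp_nat_mul, ← exp_nat_mul, exp_le_exp]
    linarith [mul_le_mul_of_nonneg_left hm (sub_nonneg.2 hL)]
  calc (1 - L * r) ^ m
      ≤ ((1 - r) * exp (-((L - 1) * r))) ^ m := pow_le_pow_left₀ (sub_nonneg.2 hLr) hfactor m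
    _ = exp (-((L - 1) * r)) ^ m * (1 - r) ^ m := by rw [mul_pow, mul_comm]
    _ ≤ exp (-(θ * (L - 1))) ^ s * (1 - r) ^ m := by gcongr

lemma eventually_exp_neg_mul_sub_one_le {τ θ : ℝ} (hτθ : τ < θ) :
    ∀ᶠ L : ℝ in atTop, exp (-(θ * (L - 1))) ≤ exp (-(τ * L)) * (1 / L) := by
  have hlim := tendsto_rpow_mul_exp_neg_mul_atTop_nhds_zero 1 (θ - τ) (sub_pos.2 hτθ)
  filter_upwards [hlim.eventually_le_const (exp_pos (-θ)), eventually_gt_atTop 0] with L hL hL₀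
  rw [rpow_one] at hL
  rw [mul_one_div, le_div_iff₀ hL₀]
  calc exp (-(θ * (L - 1))) * L
      = L * exp (-(θ - τ) * L) * (exp θ * exp (-(τ * L))) := by
        rw [mul_assoc, ← exp_add, ← exp_add, mul_comm]
        ring_nf
    _ ≤ exp (-θ) * (exp θ * exp (-(τ * L))) := by gcongr
    _ = exp (-(τ * L)) := by rw [← mul_assoc, ← exp_add, neg_add_cancel, exp_zero, one_mul]

lemma eventually_one_sub_pow_le {d : ℕ} {p : ℕ → ℝ} {β B τ θ : ℝ} (hβ : 0 < β) (hτ : 0 ≤ τ)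
    (hτθ : τ < θ) (hp : ∀ᶠ n : ℕ in atTop, β * log n / n.choose d ≤ p n ∧ p n ≤ 1) :
    ∀ᶠ n : ℕ in atTop, ∀ s m : ℕ, B ≤ τ * β * s → θ * s * n.choose d ≤ m →
      (1 - p n) ^ m ≤ (n : ℝ) ^ (-B) *
        ((1 / (p n * n.choose d)) ^ s * (1 - p n * (1 / (p n * n.choose d))) ^ m) := by
  have hlog : Tendsto (fun n : ℕ => β * log n) atTop atTop :=
    (tendsto_log_atTop.comp tendsto_natCast_atTop_atTop).const_mul_atTop hβ
  filter_upwards [hp, hlog.eventually (eventually_forall_ge_atTop.2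
    ((eventually_exp_neg_mul_sub_one_le hτθ).and (eventually_ge_atTop 1))),
    eventually_ge_atTop (d + 1)] with n ⟨hpn, hp₁⟩ hL hdn s m hs hm
  have hM : (0 : ℝ) < n.choose d := mod_cast Nat.choose_pos (by lia)
  have hn : (0 : ℝ) < n := mod_cast (by lia : 0 < n)
  set M : ℝ := (n.choose d : ℝ)
  set L := p n * M with hLdef
  have hlogL : β * log n ≤ L := (div_le_iff₀ hM).1 hpn
  obtain ⟨hexp, hL₁⟩ := hL L hlogL
  have hL₀ : 0 < L := by linarith
  have hp₀ : 0 < p n := pos_of_mul_pos_left hL₀ hM.le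
  have hr : p n * (1 / L) = 1 / M := by rw [hLdef]; field_simp
  have hLr : L * (1 / M) = p n := by rw [hLdef]; field_simp
  have hM₁ : 0 ≤ 1 - 1 / M :=
    hr ▸ sub_nonneg.2 (mul_le_one₀ hp₁ (by positivity) ((div_le_one hL₀).2 hL₁))
  have hdecay : exp (-(τ * L)) ^ s ≤ (n : ℝ) ^ (-B) := by
    rw [← exp_nat_mul, rpow_def_of_pos hn, exp_le_exp]
    calc s * -(τ * L) ≤ s * -(τ * (β * log n)) := by gcongr
      _ = log n * -(τ * β * s) := by ring
      _ ≤ log n * -B := by gcongr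
  calc (1 - p n) ^ m
      ≤ exp (-(θ * (L - 1))) ^ s * (1 - 1 / M) ^ m := by
        rw [← hLr]
        refine one_sub_mul_pow_le hL₁ (by positivity) (hLr.trans_le hp₁) ?_
        rwa [mul_one_div, le_div_iff₀ hM]
    _ ≤ (exp (-(τ * L)) * (1 / L)) ^ s * (1 - 1 / M) ^ m := by
        gcongr
    _ = exp (-(τ * L)) ^ s * ((1 / L) ^ s * (1 - 1 / M) ^ m) := by rw [mul_pow, mul_assoc]
    _ ≤ (n : ℝ) ^ (-B) * ((1 / L) ^ s * (1 - p n * (1 / L)) ^ m) := by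
        rw [hr]
        gcongr

end ThinningEstimate

section UniqueComponent

open Finset

variable {j k : ℕ} {p : ℕ → ℝ} {β γ B : ℝ}

lemma eventually_one_sub_pow_card_mixedSets_le (hj : 1 ≤ j) (hjk : j < k) (hβ : 0 < β)
    (hB : B < β * k.choose j)
    (hp : ∀ᶠ n : ℕ in atTop, β * Real.log n / n.choose (k - j) ≤ p n ∧ p n ≤ 1) :
    ∀ᶠ n : ℕ in atTop, ∀ C ∈ smallerComponentCandidates n k j,
      (1 - p n) ^ #(mixedSets k j C) ≤ (n : ℝ) ^ (-B) *
        ((1 / (p n * n.choose (k - j))) ^ #C *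
          (1 - p n * (1 / (p n * n.choose (k - j)))) ^ #(mixedSets k j C)) := by
  have hchoose : (0 : ℝ) < k.choose j := mod_cast Nat.choose_pos hjk.le
  obtain ⟨τ, hτ, hτ₁⟩ : ∃ τ, max 0 (B / (β * k.choose j)) < τ ∧ τ < 1 :=
    exists_between (max_lt one_pos ((div_lt_one (by positivity)).2 hB))
  obtain ⟨hτ₀, hBτ⟩ := max_lt_iff.1 hτ
  obtain ⟨δ, hτδ, hδ⟩ := exists_between hτ₁
  obtain ⟨c, hc, hlarge⟩ := exists_pos_eventually_mul_le_card_mixedSets hjk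
  obtain ⟨S, hS⟩ := exists_nat_ge (B / (c / 2 * β))
  filter_upwards [hlarge, eventually_mul_le_card_mixedSets_of_card_le hj hjk S hδ,
    eventually_one_sub_pow_le (B := B) hβ hτ₀.le hτδ hp,
    eventually_one_sub_pow_le (B := B) hβ (half_pos hc).le (half_lt_self hc) hp]
    with n hlarge hsmall hthin_small hthin_large C hC
  obtain ⟨-, huniform, hlow, hhigh⟩ := mem_filter.1 hC
  obtain hCS | hCS := le_total #C S
  · refine hthin_small _ _ ?_ (hsmall C huniform hCS)
    calc B ≤ τ * (β * k.choose j) := ((div_lt_iff₀ (by positivity)).1 hBτ).le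
      _ = τ * β * k.choose j := by ring
      _ ≤ τ * β * #C := by gcongr
  · refine hthin_large _ _ ?_ (hlarge C huniform hhigh)
    calc B ≤ S * (c / 2 * β) := (div_le_iff₀ (by positivity)).1 hS
      _ ≤ #C * (c / 2 * β) := by gcongr
      _ = c / 2 * β * #C := by ring

theorem unique_nontrivial_component_general (hj : 1 ≤ j) (hjk : j < k) (hβ : 0 < β)
    (hγ : γ + j < β * k.choose j)
    (hp : ∀ᶠ n : ℕ in atTop, β * Real.log n / n.choose (k - j) ≤ p n ∧ p n ≤ 1) :
    ∀ᶠ n : ℕ in atTop,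
      1 - (n : ℝ) ^ (-γ) ≤ binomProb n k (p n) (AtMostOneNontrivialComponent n j) := by
  have hlog : Tendsto (fun n : ℕ => β * Real.log n) atTop atTop :=
    (Real.tendsto_log_atTop.comp tendsto_natCast_atTop_atTop).const_mul_atTop hβ
  filter_upwards [hp, hlog.eventually_ge_atTop 1, eventually_ge_atTop k,
    eventually_one_sub_pow_card_mixedSets_le hj hjk hβ hγ hp] with n ⟨hpn, hp₁⟩ hlog hkn hthin
  have hn : (0 : ℝ) < n := mod_cast (by lia : 0 < n)
  have hM : (0 : ℝ) < n.choose (k - j) := mod_cast Nat.choose_pos (by lia)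
  have hL : 1 ≤ p n * n.choose (k - j) := hlog.trans ((div_le_iff₀ hM).1 hpn)
  have hp₀ : 0 < p n := pos_of_mul_pos_left (one_pos.trans_le hL) hM.le
  refine le_trans ?_ (one_sub_mul_le_binomProb_atMostOneNontrivialComponent hjk.le hp₀.le hp₁
    (by positivity) ((div_le_one (by positivity)).2 hL) (by positivity) hthin)
  have hedges : n.choose k * (p n * (1 / (p n * n.choose (k - j)))) ≤ (n : ℝ) ^ j :=
    calc n.choose k * (p n * (1 / (p n * n.choose (k - j))))
        = (n.choose k : ℝ) / n.choose (k - j) := by field_simp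
      _ ≤ (n : ℝ) ^ j := by
          rw [div_le_iff₀ hM]
          exact_mod_cast choose_le_pow_mul_choose_sub hjk.le
  have hpow : (n : ℝ) ^ (-(γ + j)) * (n : ℝ) ^ j = (n : ℝ) ^ (-γ) := by
    rw [← Real.rpow_add_natCast hn.ne', neg_add, neg_add_cancel_right]
  rw [← hpow]
  gcongr

end UniqueComponent

section CriticalWindow

open Real

lemma eventually_mul_le_sub_log_log {a b : ℝ} (hab : a < b) :
    ∀ᶠ n : ℕ in atTop, a * log n ≤ b * log n - log (log n) := by
  have hlog : Tendsto (fun n : ℕ => log n) atTop atTop :=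
    tendsto_log_atTop.comp tendsto_natCast_atTop_atTop
  filter_upwards [hlog.eventually (isLittleO_log_id_atTop.bound (sub_pos.2 hab)),
    hlog.eventually_ge_atTop 0] with n hloglog hlog₀
  rw [id, norm_eq_abs, norm_eq_abs, abs_of_nonneg hlog₀] at hloglog
  linarith [le_of_abs_le hloglog]

lemma eventually_mul_log_add_log_log_le (b : ℝ) :
    ∀ᶠ n : ℕ in atTop, b * log n + log (log n) ≤ n := by
  have hlog : ∀ᶠ x : ℝ in atTop, ‖(b + 1) * log x‖ ≤ 1 * ‖x‖ :=
    (isLittleO_log_id_atTop.const_mul_left (b + 1)).bound one_pos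
  filter_upwards [tendsto_natCast_atTop_atTop.eventually hlog] with n hn
  rw [one_mul, norm_natCast] at hn
  calc b * log n + log (log n)
      ≤ b * log n + log n := by linarith [log_le_self (log_natCast_nonneg n)]
    _ = (b + 1) * log n := by ring
    _ ≤ n := (le_norm_self _).trans hn

end CriticalWindow

/-- **Uniqueness of the non-trivial component.** For `k ≥ 3`, `1 ≤ j ≤ k-1`, `ω = log log n`,
and `(j log n - ω)/C(n,k-j) ≤ p ≤ (j log n + ω)/C(n,k-j)`, with probability at least
`1 - 3·n^{-12j/7}` (for sufficiently large `n`) the random hypergraph `H^k(n,p)` has at most one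
non-trivial `j`-component, i.e. any two `j`-components containing more than one `j`-set
coincide. -/
theorem unique_nontrivial_component (k j : ℕ) (hk : 3 ≤ k) (hj : 1 ≤ j) (hjk : j ≤ k - 1)
    (p : ℕ → ℝ)
    (hp : ∀ᶠ n : ℕ in atTop,
      ((j : ℝ) * Real.log n - Real.log (Real.log n)) / (n.choose (k - j) : ℝ) ≤ p n ∧
        p n ≤ ((j : ℝ) * Real.log n + Real.log (Real.log n)) / (n.choose (k - j) : ℝ)) :
    ∀ᶠ n : ℕ in atTop,
      1 - 3 * (n : ℝ) ^ (-(12 * (j : ℝ)) / 7) ≤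
        binomProb n k (p n) (fun H =>
          ∀ C1 C2 : Finset (Finset (Fin n)),
            IsJComponent n j H C1 → IsJComponent n j H C2 →
            2 ≤ C1.card → 2 ≤ C2.card → C1 = C2) := by
  have hj₀ : (1 : ℝ) ≤ j := mod_cast hj
  have hchoose : (3 : ℝ) ≤ k.choose j := mod_cast hk.trans (le_choose hj (by lia))
  have hp' : ∀ᶠ n : ℕ in atTop, 19 / 20 * j * Real.log n / n.choose (k - j) ≤ p n ∧ p n ≤ 1 := by
    filter_upwards [hp, eventually_mul_le_sub_log_log (by linarith : 19 / 20 * (j : ℝ) < j),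
      eventually_mul_log_add_log_log_le j, eventually_gt_atTop (k - j)]
      with n ⟨hlower, hupper⟩ hα hone hn
    have hn_le : (n : ℝ) ≤ n.choose (k - j) := mod_cast le_choose (by lia) hn
    refine ⟨le_trans (by gcongr) hlower, hupper.trans ?_⟩
    exact div_le_one_of_le₀ (hone.trans hn_le) (Nat.cast_nonneg _)
  filter_upwards [unique_nontrivial_component_general (γ := 12 * j / 7) hj (by lia)
    (by positivity) (by nlinarith) hp'] with n hn
  refine le_trans ?_ hn
  rw [← neg_div]
  linarith [Real.rpow_nonneg n.cast_nonneg (-(12 * (j : ℝ)) / 7)]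

end
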